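/- (Lemma 2 of the paper) The square of Δ_F = Δ_1 + V, where V = ((-1)^{ε_A}/2)F_A(Γ^A, ·), satisfies Δ_F² = Δ_1² + (1/2)Δ_{F,R} + (ν_F^{(0)}, ·), where ν_F^{(0)} = ((-1)^{ε_A}/4)(∂_A + F_A/2)(E^{AB}F_B) and Δ_{F,R} = ((-1)^{ε_A}/2)(∂_A + F_A)R^{AB}∂_B. -/

import Mathlib

/-!
Let `W = 2V = W^B ∂_B` with `W^B = (-1)^{ε_A} F_A E^{AB}` (`vec`), an odd vector field. Then
`4 (Δ_F² - Δ_1²) = (2Δ_1 W + W 2Δ_1) + W²`, and the two summands are computed separately.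

The key fact (`curvUp_eq`) is that the raised curvature is the Lie derivative of the antisymplectic
tensor along `W`,
`(-1)^{ε_A} R^{AD} = (-1)^{ε_A} E^{AB} (∂_B W^D) + W^C (∂_C E^{AD})
  - (-1)^{ε_A ε_C} (∂_C W^A) E^{CD}`.
The terms with derivatives of `F` agree by skewsymmetry of `E`, and the terms with derivatives of
`E` cancel by the Jacobi identity contracted once with `F` (`jacobi_F`). The Jacobi identity for the
components of `E` is obtained by evaluating the one for the antibracket on coordinates.

* Linear in `F` (`anticomm`): integrating by parts (`mul_D_D`) turns `2Δ_1 W + W 2Δ_1` into the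
  divergence of a vector field plus `(∂_C W^C, ·)`. By `curvUp_eq` the vector field has components
  `R^{AB} ∂_B g`, since its second-derivative terms cancel (`anticomm_component`).
* Quadratic in `F` (`vec_op_sq`, `vec_sq`): `W²` is a vector field because `W` is odd. Contracting
  `curvUp_eq` with `F_A`, and using the Jacobi identity contracted twice with `F`, gives
  `W² = (-1)^{ε_A} F_A R^{AB} ∂_B + ½ (F_A W^A, ·)`.

Finally `4 ν_F^{(0)} = ∂_A W^A + ½ F_A W^A` (`nuF0_eq`). Every monomial identity reduces to an
equation between exponents in `ZMod 2`, checked over all parities. Since only the coefficients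
`E`, `F`, `W` and their derivatives are moved, the function acted on need not be homogeneous.
-/


open scoped BigOperators

noncomputable section

/-- The sign `(-1)^p` for a parity `p : ZMod 2`, valued in `ℚ`. -/
def sgn (p : ZMod 2) : ℚ := if p = 0 then 1 else -1

/-- A supercommutative algebra of "functions on a superdomain" with local coordinates
`coord i`, Grassmann parities `ε i`, and left partial derivatives `D i`. -/
structure SuperAlg (ι : Type) [Fintype ι] [DecidableEq ι]
    (A : Type) [Ring A] [Algebra ℚ A] where
  ε : ι → ZMod 2
  hom : ZMod 2 → Submodule ℚ A
  one_mem : (1 : A) ∈ hom 0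
  mul_mem : ∀ {p q : ZMod 2} {a b : A}, a ∈ hom p → b ∈ hom q → a * b ∈ hom (p + q)
  supercomm : ∀ {p q : ZMod 2} {a b : A}, a ∈ hom p → b ∈ hom q →
    a * b = sgn (p * q) • (b * a)
  D : ι → A →ₗ[ℚ] A
  D_mem : ∀ (i : ι) {p : ZMod 2} {a : A}, a ∈ hom p → D i a ∈ hom (p + ε i)
  D_leibniz : ∀ (i : ι) {p : ZMod 2} {a : A} (b : A), a ∈ hom p →
    D i (a * b) = D i a * b + sgn (ε i * p) • (a * D i b)
  D_comm : ∀ (i j : ι) (a : A), D i (D j a) = sgn (ε i * ε j) • D j (D i a)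
  coord : ι → A
  coord_mem : ∀ i, coord i ∈ hom (ε i)
  D_coord : ∀ i j, D i (coord j) = if i = j then (1 : A) else 0

namespace SuperAlg

variable {ι : Type} [Fintype ι] [DecidableEq ι]
variable {A : Type} [Ring A] [Algebra ℚ A]

/-- The operator of left multiplication by `f`. -/
def L (f : A) : A →ₗ[ℚ] A := LinearMap.mulLeft ℚ f

/-- The graded commutator `[T,U] = T∘U - (-1)^{pq} U∘T` of operators of parities `p`, `q`. -/
def gcomm (p q : ZMod 2) (T U : A →ₗ[ℚ] A) : A →ₗ[ℚ] A :=
  T ∘ₗ U - sgn (p * q) • (U ∘ₗ T)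

variable (S : SuperAlg ι A)

/-- The bracket `(f,g) = (f ∂⃖_A) M^{AB} (∂_B g)` built from the matrix `M`,
for `f` homogeneous of parity `pf`; the right derivative is expressed through
the left one via `f ∂⃖_A = (-1)^{ε_A (ε_f + 1)} ∂_A f`. -/
def brkt (M : ι → ι → A) (pf : ZMod 2) (f g : A) : A :=
  ∑ a, ∑ b, sgn (S.ε a * (pf + 1)) • (S.D a f * (M a b * S.D b g))

/-- The first-order operator `(x, ·)` (for Grassmann-odd `x`), built from the matrix `M`. -/
def Hop (M : ι → ι → A) (x : A) : A →ₗ[ℚ] A :=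
  ∑ a, ∑ b, L (S.D a x) ∘ₗ L (M a b) ∘ₗ S.D b

/-- The Laplacian `((-1)^{ε_A}/2)(∂_A + F_A) M^{AB} ∂_B`. -/
def lap (F : ι → A) (M : ι → ι → A) : A →ₗ[ℚ] A :=
  (1/2 : ℚ) • ∑ a, ∑ b, sgn (S.ε a) •
    ((S.D a ∘ₗ L (M a b) ∘ₗ S.D b) + (L (F a) ∘ₗ L (M a b) ∘ₗ S.D b))

/-- The curvature `R_{AB} = (∂_A F_B) - (-1)^{ε_A ε_B}(∂_B F_A)` of a line bundle
connection `F`. -/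
def curv (F : ι → A) (a b : ι) : A :=
  S.D a (F b) - sgn (S.ε a * S.ε b) • S.D b (F a)

/-- The raised-index curvature `R^{AD} = E^{AB} R_{BC} E^{CD} (-1)^{ε_C}`. -/
def curvUp (E : ι → ι → A) (F : ι → A) (a d : ι) : A :=
  ∑ b, ∑ c, sgn (S.ε c) • (E a b * (S.curv F b c * E c d))

/-- The graded Jacobi identity for the antibracket, on homogeneous functions. -/
def JacobiId (E : ι → ι → A) : Prop :=
  ∀ (pf pg ph : ZMod 2) (f g h : A),
    f ∈ S.hom pf → g ∈ S.hom pg → h ∈ S.hom ph →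
      sgn ((pf + 1) * (ph + 1)) • S.brkt E pf f (S.brkt E pg g h)
      + sgn ((pg + 1) * (pf + 1)) • S.brkt E pg g (S.brkt E ph h f)
      + sgn ((ph + 1) * (pg + 1)) • S.brkt E ph h (S.brkt E pf f g) = 0

/-- The closedness relation `Σ_{cycl. A,B,C} (-1)^{ε_A ε_C} (∂_A E_{BC}) = 0`
for the two-form with components `Einv`. -/
def ClosedId (Einv : ι → ι → A) : Prop :=
  ∀ a b c : ι,
    sgn (S.ε a * S.ε c) • S.D a (Einv b c)
    + sgn (S.ε b * S.ε a) • S.D b (Einv c a)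
    + sgn (S.ε c * S.ε b) • S.D c (Einv a b) = 0

/-- The Jacobi identity `Σ_{cycl. A,B,C} (-1)^{(ε_A+1)(ε_C+1)} E^{AD} (∂_D E^{BC}) = 0`
in terms of the matrix `E^{AB}`. -/
def EJacobiId (E : ι → ι → A) : Prop :=
  ∀ a b c : ι,
    ∑ d, (sgn ((S.ε a + 1) * (S.ε c + 1)) • (E a d * S.D d (E b c))
      + sgn ((S.ε b + 1) * (S.ε a + 1)) • (E b d * S.D d (E c a))
      + sgn ((S.ε c + 1) * (S.ε b + 1)) • (E c d * S.D d (E a b))) = 0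

/-- `E` is a non-degenerate graded-skewsymmetric (2,0)-tensor with inverse `Einv`. -/
structure AntiSymp (E Einv : ι → ι → A) : Prop where
  E_mem : ∀ a b, E a b ∈ S.hom (S.ε a + S.ε b + 1)
  E_skew : ∀ a b, E a b = - sgn ((S.ε a + 1) * (S.ε b + 1)) • E b a
  Einv_mem : ∀ a b, Einv a b ∈ S.hom (S.ε a + S.ε b + 1)
  Einv_skew : ∀ a b, Einv a b = - sgn (S.ε a * S.ε b) • Einv b a
  mul_inv : ∀ a c, ∑ b, E a b * Einv b c = if a = c then (1 : A) else 0
  inv_mul : ∀ a c, ∑ b, Einv a b * E b c = if a = c then (1 : A) else 0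

/-- An operator `T` of parity `pT` is of at most first order iff all its double graded
commutators with left multiplication operators vanish. -/
def IsFirstOrder (pT : ZMod 2) (T : A →ₗ[ℚ] A) : Prop :=
  ∀ (pf pg : ZMod 2) (f g : A), f ∈ S.hom pf → g ∈ S.hom pg →
    gcomm (pT + pf) pg (gcomm pT pf T (L f)) (L g) = 0

/-- The third-order terms of an operator `T` of parity `pT` vanish iff all its triple
graded commutators with left multiplication operators vanish. -/
def ThirdOrderVanish (pT : ZMod 2) (T : A →ₗ[ℚ] A) : Prop :=
  ∀ (pf pg ph : ZMod 2) (f g h : A),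
    f ∈ S.hom pf → g ∈ S.hom pg → h ∈ S.hom ph →
      gcomm (pT + pf + pg) ph
        (gcomm (pT + pf) pg (gcomm pT pf T (L f)) (L g)) (L h) = 0

/-- `ν_F^{(0)} = ((-1)^{ε_A}/4)(∂_A + F_A/2)(E^{AB} F_B)`. -/
def nuF0 (E : ι → ι → A) (F : ι → A) : A :=
  (1/4 : ℚ) • ∑ a, ∑ b, sgn (S.ε a) •
    (S.D a (E a b * F b) + (1/2 : ℚ) • (F a * (E a b * F b)))

/-- `ν^{(1)} = (-1)^{ε_A} (∂_B ∂_A E^{AB})`. -/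
def nu1 (E : ι → ι → A) : A :=
  ∑ a, ∑ b, sgn (S.ε a) • S.D b (S.D a (E a b))

/-- `ν^{(2)} = (-1)^{ε_A ε_C} (∂_D E^{AB}) E_{BC} (∂_A E^{CD})`. -/
def nu2 (E Einv : ι → ι → A) : A :=
  ∑ a, ∑ b, ∑ c, ∑ d, sgn (S.ε a * S.ε c) •
    (S.D d (E a b) * (Einv b c * S.D a (E c d)))

/-- `ν_F = ν_F^{(0)} + ν^{(1)}/8 - ν^{(2)}/24`. -/
def nuF (E Einv : ι → ι → A) (F : ι → A) : A :=
  S.nuF0 E F + (1/8 : ℚ) • S.nu1 E - (1/24 : ℚ) • S.nu2 E Einv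

/-- The divergence `div_1 X = (-1)^{ε_A} (∂_A X^A)`. -/
def div1 (X : ι → A) : A := ∑ a, sgn (S.ε a) • S.D a (X a)

/-- A form variation (infinitesimal coordinate transformation `δΓ^A = X^A`, compared
at the same argument): an even derivation commuting with the partial derivatives. -/
structure FormVar (X : ι → A) (δv : A →ₗ[ℚ] A) : Prop where
  deriv : ∀ a b : A, δv (a * b) = δv a * b + a * δv b
  commD : ∀ (i : ι) (a : A), δv (S.D i a) = S.D i (δv a)
  X_mem : ∀ i, X i ∈ S.hom (S.ε i)

/-- The form variation of a (2,0)-tensor `E^{AB}` under `δΓ^A = X^A`: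
`δE^{AB} = (X^A ∂⃖_C) E^{CB} + E^{AC}(∂_C X^B) - X^C (∂_C E^{AB})`. -/
def VarE (X : ι → A) (δv : A →ₗ[ℚ] A) (E : ι → ι → A) : Prop :=
  ∀ a b, δv (E a b) =
    (∑ c, sgn (S.ε c * (S.ε a + 1)) • (S.D c (X a) * E c b))
    + (∑ c, E a c * S.D c (X b))
    - ∑ c, X c * S.D c (E a b)

/-- The form variation of a line bundle connection `F_A` under `δΓ^A = X^A`:
`δF_A = -(∂_A X^B) F_B - ∂_A(div_1 X) - X^C (∂_C F_A)`. -/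
def VarF (X : ι → A) (δv : A →ₗ[ℚ] A) (F : ι → A) : Prop :=
  ∀ a, δv (F a) =
    - (∑ b, S.D a (X b) * F b) - S.D a (S.div1 X) - ∑ c, X c * S.D c (F a)

/-- Khudaverdian–Voronov's odd quantity
`ν(F¹;F²,E) = ((-1)^{ε_A}/4)(∂_A + (F¹_A+F²_A)/2)(E^{AB}(F¹_B - F²_B))`. -/
def nu12 (E : ι → ι → A) (F1 F2 : ι → A) : A :=
  (1/4 : ℚ) • ∑ a, ∑ b, sgn (S.ε a) •
    (S.D a (E a b * (F1 b - F2 b))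
      + (1/2 : ℚ) • ((F1 a + F2 a) * (E a b * (F1 b - F2 b))))

/-- The odd Laplacian `Δ_ρ = ((-1)^{ε_A}/(2ρ)) ∂_A ρ E^{AB} ∂_B` for a density `ρ`
with inverse `ρinv`. -/
def lapRho (E : ι → ι → A) (ρ ρinv : A) : A →ₗ[ℚ] A :=
  (1/2 : ℚ) • ∑ a, ∑ b, sgn (S.ε a) •
    (L ρinv ∘ₗ S.D a ∘ₗ L ρ ∘ₗ L (E a b) ∘ₗ S.D b)

/-- `ν_ρ^{(0)} = (Δ_1 √ρ)/√ρ`, where `sq = √ρ` and `sqinv = 1/√ρ`. -/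
def nuRho0 (E : ι → ι → A) (sq sqinv : A) : A :=
  sqinv * (S.lap (fun _ => (0 : A)) E sq)

/-- `ν_ρ = ν_ρ^{(0)} + ν^{(1)}/8 - ν^{(2)}/24`. -/
def nuRho (E Einv : ι → ι → A) (sq sqinv : A) : A :=
  S.nuRho0 E sq sqinv + (1/8 : ℚ) • S.nu1 E - (1/24 : ℚ) • S.nu2 E Einv

/-- Khudaverdian's operator `Δ_E = Δ_1 + ν^{(1)}/8 - ν^{(2)}/24`. -/
def lapE (E Einv : ι → ι → A) : A →ₗ[ℚ] A :=
  S.lap (fun _ => (0 : A)) E + L ((1/8 : ℚ) • S.nu1 E - (1/24 : ℚ) • S.nu2 E Einv)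

/-- The reordered Christoffel symbols `Γ^A{}_{BC} = (-1)^{ε_A ε_B} Γ_B{}^A{}_C`. -/
def Gup (Gm : ι → ι → ι → A) (a b c : ι) : A := sgn (S.ε a * S.ε b) • Gm b a c

/-- The reordered Riemann curvature tensor
`R^A{}_{BCD} = (-1)^{ε_A ε_B}(∂_B Γ^A{}_{CD}) + Γ^A{}_{BE} Γ^E{}_{CD} - (-1)^{ε_B ε_C}(B ↔ C)`,
expressed through the reordered Christoffel symbols `Gu = Γ^·{}_{··}`. -/
def riemRe (Gu : ι → ι → ι → A) (a b c d : ι) : A :=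
  sgn (S.ε a * S.ε b) • S.D b (Gu a c d) + (∑ e, Gu a b e * Gu e c d)
  - sgn (S.ε b * S.ε c) •
      (sgn (S.ε a * S.ε c) • S.D c (Gu a b d) + ∑ e, Gu a c e * Gu e b d)

/-- The Ricci tensor `R_{AB} = R^C{}_{CAB}`. -/
def ricci (Gu : ι → ι → ι → A) (a b : ι) : A := ∑ c, S.riemRe Gu c c a b

/-- The odd scalar curvature `R = R_{AB} E^{BA}`. -/
def scalarR (Gu : ι → ι → ι → A) (E : ι → ι → A) : A :=
  ∑ a, ∑ b, S.ricci Gu a b * E b a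

/-- The Riemann curvature tensor
`R_{AB}{}^C{}_D = (∂_A Γ_B{}^C{}_D) + (-1)^{ε_B ε_C} Γ_A{}^C{}_E Γ^E{}_{BD} - (-1)^{ε_A ε_B}(A ↔ B)`,
built from the Christoffel symbols `Gm = Γ_·{}^·{}_·`. -/
def riem (Gm : ι → ι → ι → A) (a b c d : ι) : A :=
  S.D a (Gm b c d) + sgn (S.ε b * S.ε c) • (∑ e, Gm a c e * S.Gup Gm e b d)
  - sgn (S.ε a * S.ε b) •
      (S.D b (Gm a c d) + sgn (S.ε a * S.ε c) • ∑ e, Gm b c e * S.Gup Gm e a d)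

/-- The Christoffel symbols with three lower indices,
`Γ_{ABC} = E_{AD} Γ^D{}_{BC} (-1)^{ε_B}`, built from `Gu = Γ^·{}_{··}`. -/
def Glow (Einv : ι → ι → A) (Gu : ι → ι → ι → A) (a b c : ι) : A :=
  sgn (S.ε b) • ∑ d, Einv a d * Gu d b c

/-- `γ_{ABC} = Γ_{ABC} - (1/3)(E_{AB} ∂⃖_C + E_{AC} ∂⃖_B (-1)^{ε_B ε_C})`. -/
def gam (Einv : ι → ι → A) (Gu : ι → ι → ι → A) (a b c : ι) : A :=
  S.Glow Einv Gu a b c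
  - (1/3 : ℚ) • (sgn (S.ε c * (S.ε a + S.ε b)) • S.D c (Einv a b)
      + sgn (S.ε b * S.ε c) • (sgn (S.ε b * (S.ε a + S.ε c)) • S.D b (Einv a c)))

end SuperAlg

namespace SuperAlg

section Aux

variable {ι : Type} [Fintype ι] [DecidableEq ι]
variable {A : Type} [Ring A] [Algebra ℚ A]

/-! ### Signs -/

theorem sgn_mul_sgn (p q : ZMod 2) : sgn p * sgn q = sgn (p + q) := by
  have h : ∀ p : ZMod 2, p = 0 ∨ p = 1 := by decide
  rcases h p with rfl | rfl <;> rcases h q with rfl | rfl <;>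
    simp [sgn, show (1 : ZMod 2) + 1 = 0 from rfl]

theorem neg_sgn (p : ZMod 2) : -sgn p = sgn (p + 1) := by
  have h : ∀ p : ZMod 2, p = 0 ∨ p = 1 := by decide
  rcases h p with rfl | rfl <;> simp [sgn, show (1 : ZMod 2) + 1 = 0 from rfl]

theorem sgn_smul_sgn_smul (p q : ZMod 2) (x : A) : sgn p • sgn q • x = sgn (p + q) • x := by
  rw [smul_smul, sgn_mul_sgn]

theorem neg_sgn_smul (p : ZMod 2) (x : A) : -(sgn p • x) = sgn (p + 1) • x := by
  rw [← neg_smul, neg_sgn]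

theorem sgn_zero_smul (x : A) : sgn 0 • x = x := by simp [sgn]

theorem eq_zero_of_eq_neg {x : A} (h : x = -x) : x = 0 := by
  linear_combination (norm := module) (1/2 : ℚ) • h

/-! ### The vector field of the connection -/

variable (S : SuperAlg ι A)

/-- The components `W^B = (-1)^{ε_A} F_A E^{AB}` of the odd vector field `2V`. -/
def vec (E : ι → ι → A) (F : ι → A) (d : ι) : A := ∑ a, sgn (S.ε a) • (F a * E a d)

variable {S} {E Einv : ι → ι → A} {F : ι → A}

theorem AntiSymp.skew (hE : S.AntiSymp E Einv) (a b : ι) :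
    E a b = sgn ((S.ε a + 1) * (S.ε b + 1) + 1) • E b a := by
  rw [← neg_sgn]; exact hE.E_skew a b

theorem vec_mem (hE : S.AntiSymp E Einv) (hF : ∀ a, F a ∈ S.hom (S.ε a)) (d : ι) :
    S.vec E F d ∈ S.hom (S.ε d + 1) := by
  refine Submodule.sum_mem _ fun a _ => Submodule.smul_mem _ _ ?_
  have h := S.mul_mem (hF a) (hE.E_mem a d)
  have e : S.ε a + (S.ε a + S.ε d + 1) = S.ε d + 1 := by
    generalize S.ε a = p; generalize S.ε d = q; revert p q; decide
  rwa [e] at h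

/-- Contracting `F` with the second index of `E` gives the same vector field up to sign. -/
theorem sum_E_mul_F (hE : S.AntiSymp E Einv) (hF : ∀ a, F a ∈ S.hom (S.ε a)) (a : ι) :
    ∑ b, E a b * F b = sgn (S.ε a) • S.vec E F a := by
  rw [vec, Finset.smul_sum]
  refine Finset.sum_congr rfl fun b _ => ?_
  rw [S.supercomm (hE.E_mem a b) (hF b), hE.skew a b]
  simp only [mul_smul_comm, sgn_smul_sgn_smul]
  congr 2
  generalize S.ε a = p; generalize S.ε b = q; revert p q; decide

theorem D_vec (hF : ∀ a, F a ∈ S.hom (S.ε a)) (c d : ι) :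
    S.D c (S.vec E F d) = ∑ e, sgn (S.ε e) • (S.D c (F e) * E e d
      + sgn (S.ε c * S.ε e) • (F e * S.D c (E e d))) := by
  simp only [vec, map_sum, map_smul, S.D_leibniz c _ (hF _)]

/-! ### The Jacobi identity and the raised curvature -/

/-- The Jacobi identity for `E`, read off from the antibrackets of three coordinates. -/
theorem eJacobi (hJac : S.JacobiId E) : S.EJacobiId E := by
  have h1 : ∀ b g, S.brkt E (S.ε b) (S.coord b) g = ∑ d, E b d * S.D d g := by
    intro b g
    rw [brkt, Finset.sum_eq_single b]
    · refine Finset.sum_congr rfl fun d _ => ?_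
      have : S.ε b * (S.ε b + 1) = 0 := by generalize S.ε b = p; revert p; decide
      rw [this, sgn_zero_smul, S.D_coord, if_pos rfl, one_mul]
    · intro a _ hab
      simp [S.D_coord, hab]
    · simp
  have h2 : ∀ b c, S.brkt E (S.ε b) (S.coord b) (S.coord c) = E b c := by
    intro b c
    rw [h1]
    simp [S.D_coord]
  intro a b c
  have h := hJac _ _ _ _ _ _ (S.coord_mem a) (S.coord_mem b) (S.coord_mem c)
  simp only [h2] at h
  simp only [h1, Finset.smul_sum, ← Finset.sum_add_distrib] at h
  exact h

/-- The Jacobi identity with free indices `a`, `e`, `d`, multiplied by `F e` (without summing over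
`e`) and brought to the signs in which it enters `curvUp_eq`. -/
theorem jacobi_F (hE : S.AntiSymp E Einv) (hF : ∀ a, F a ∈ S.hom (S.ε a))
    (hJac : S.JacobiId E) (a e d : ι) :
    (∑ c, sgn (S.ε a + S.ε e + S.ε c * S.ε e) • (E a c * (F e * S.D c (E e d))))
      + (∑ c, sgn (S.ε e) • (F e * (E e c * S.D c (E a d))))
    = ∑ c, sgn (S.ε a * S.ε c + S.ε e + S.ε c * S.ε e) • (F e * (S.D c (E e a) * E c d)) := by
  have hJ := eJacobi hJac a e d
  -- the sign relating the first terms on the two sides is common to all terms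
  have hJ' := congrArg
    (fun x => sgn (S.ε a + S.ε e * S.ε a + (S.ε a + 1) * (S.ε d + 1)) • (F e * x)) hJ
  simp only [mul_zero, smul_zero, Finset.mul_sum, Finset.smul_sum] at hJ'
  rw [← sub_eq_zero, ← hJ', ← Finset.sum_add_distrib, ← Finset.sum_sub_distrib]
  refine Finset.sum_congr rfl fun c _ => ?_
  rw [mul_add (F e), mul_add (F e), smul_add, smul_add, sub_eq_add_neg]
  congr 1
  · congr 1
    · rw [← mul_assoc, S.supercomm (hE.E_mem a c) (hF e)]
      simp only [smul_mul_assoc, mul_smul_comm, sgn_smul_sgn_smul, mul_assoc]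
      congr 2
      generalize S.ε a = p; generalize S.ε e = q; generalize S.ε c = r; generalize S.ε d = s
      revert p q r s; decide
    · rw [hE.skew a d]
      simp only [map_smul, mul_smul_comm, sgn_smul_sgn_smul]
      congr 2
      generalize S.ε a = p; generalize S.ε e = q; generalize S.ε c = r; generalize S.ε d = s
      revert p q r s; decide
  · rw [S.supercomm (S.D_mem c (hE.E_mem e a)) (hE.E_mem c d), hE.skew e a, hE.skew c d]
    simp only [map_smul, smul_mul_assoc, mul_smul_comm, sgn_smul_sgn_smul, neg_sgn_smul]
    congr 2
    generalize S.ε a = p; generalize S.ε e = q; generalize S.ε c = r; generalize S.ε d = s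
    revert p q r s; decide

/-- The raised curvature is the Lie derivative of `E` along the vector field `W`. -/
theorem curvUp_eq (hE : S.AntiSymp E Einv) (hF : ∀ a, F a ∈ S.hom (S.ε a))
    (hJac : S.JacobiId E) (a d : ι) :
    sgn (S.ε a) • S.curvUp E F a d
      = (∑ b, sgn (S.ε a) • (E a b * S.D b (S.vec E F d)))
        + (∑ c, S.vec E F c * S.D c (E a d))
        - ∑ c, sgn (S.ε a * S.ε c) • (S.D c (S.vec E F a) * E c d) := by
  have h1 : ∑ b, sgn (S.ε a) • (E a b * S.D b (S.vec E F d))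
      = (∑ b, ∑ e, sgn (S.ε a + S.ε e) • (E a b * (S.D b (F e) * E e d)))
        + ∑ e, ∑ b, sgn (S.ε a + S.ε e + S.ε b * S.ε e) • (E a b * (F e * S.D b (E e d))) := by
    rw [Finset.sum_comm (f := fun e b => sgn (S.ε a + S.ε e + S.ε b * S.ε e) • _)]
    simp only [D_vec hF, Finset.mul_sum, Finset.smul_sum, mul_add, smul_add,
      Finset.sum_add_distrib, mul_smul_comm, sgn_smul_sgn_smul, add_assoc]
  have h2 : ∑ c, S.vec E F c * S.D c (E a d)
      = ∑ e, ∑ c, sgn (S.ε e) • (F e * (E e c * S.D c (E a d))) := by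
    rw [Finset.sum_comm]
    simp only [vec, Finset.sum_mul, smul_mul_assoc, mul_assoc]
  have h3 : ∑ c, sgn (S.ε a * S.ε c) • (S.D c (S.vec E F a) * E c d)
      = (∑ b, ∑ c, sgn (S.ε a * S.ε c + S.ε b) • (S.D c (F b) * (E b a * E c d)))
        + ∑ e, ∑ c, sgn (S.ε a * S.ε c + S.ε e + S.ε c * S.ε e)
            • (F e * (S.D c (E e a) * E c d)) := by
    rw [Finset.sum_comm (f := fun b c => sgn (S.ε a * S.ε c + S.ε b) • _),
      Finset.sum_comm (f := fun e c => sgn (S.ε a * S.ε c + S.ε e + S.ε c * S.ε e) • _)]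
    simp only [D_vec hF, Finset.sum_mul, Finset.smul_sum, add_mul, smul_add,
      Finset.sum_add_distrib, smul_mul_assoc, sgn_smul_sgn_smul, add_assoc, mul_assoc]
  have h4 : sgn (S.ε a) • S.curvUp E F a d
      = (∑ b, ∑ e, sgn (S.ε a + S.ε e) • (E a b * (S.D b (F e) * E e d)))
        - ∑ b, ∑ c, sgn (S.ε a * S.ε c + S.ε b) • (S.D c (F b) * (E b a * E c d)) := by
    simp only [curvUp, curv, Finset.smul_sum, ← Finset.sum_sub_distrib]
    refine Finset.sum_congr rfl fun b _ => Finset.sum_congr rfl fun c _ => ?_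
    rw [sub_mul, mul_sub, smul_sub, smul_sub]
    congr 1
    · rw [sgn_smul_sgn_smul]
    · rw [smul_mul_assoc, mul_smul_comm, ← mul_assoc,
        S.supercomm (hE.E_mem a b) (S.D_mem c (hF b)), hE.skew a b]
      simp only [smul_mul_assoc, mul_smul_comm, sgn_smul_sgn_smul, mul_assoc]
      congr 2
      generalize S.ε a = p; generalize S.ε b = q; generalize S.ε c = r
      revert p q r; decide
  have hJ := Finset.sum_congr (s₁ := Finset.univ) rfl
    fun e _ => jacobi_F hE hF hJac a e d
  rw [Finset.sum_add_distrib] at hJ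
  rw [h1, h2, h3, h4, ← hJ]
  abel

/-! ### The part quadratic in the connection -/

/-- Coefficientwise form of `W² = (-1)^{ε_A} F_A R^{AB} ∂_B + ½ (F_A W^A, ·)`. -/
theorem vec_sq (hE : S.AntiSymp E Einv) (hF : ∀ a, F a ∈ S.hom (S.ε a))
    (hJac : S.JacobiId E) (d : ι) :
    ∑ c, S.vec E F c * S.D c (S.vec E F d)
      = (∑ a, sgn (S.ε a) • (F a * S.curvUp E F a d))
        + (1/2 : ℚ) • ∑ c, S.D c (∑ a, F a * S.vec E F a) * E c d := by
  have h1 : ∑ a, sgn (S.ε a) • (F a * S.curvUp E F a d)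
      = (∑ c, S.vec E F c * S.D c (S.vec E F d))
        + (∑ a, ∑ e, ∑ c, sgn (S.ε e) • (F a * (F e * (E e c * S.D c (E a d)))))
        - ∑ a, ∑ c, sgn (S.ε a * S.ε c) • (F a * (S.D c (S.vec E F a) * E c d)) := by
    have h : ∀ a, sgn (S.ε a) • (F a * S.curvUp E F a d)
        = F a * (sgn (S.ε a) • S.curvUp E F a d) := fun a => by rw [mul_smul_comm]
    simp only [h, curvUp_eq hE hF hJac]
    simp only [mul_sub, mul_add, Finset.sum_sub_distrib, Finset.sum_add_distrib]
    congr 2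
    · conv_rhs => enter [2, c]; rw [vec]
      simp only [Finset.mul_sum, Finset.sum_mul, mul_smul_comm, smul_mul_assoc, mul_assoc]
      rw [Finset.sum_comm]
    · refine Finset.sum_congr rfl fun a _ => ?_
      rw [Finset.sum_comm]
      simp only [vec, Finset.mul_sum, Finset.sum_mul, mul_smul_comm, smul_mul_assoc, mul_assoc]
    · simp only [Finset.mul_sum, mul_smul_comm]
  have h2 : ∑ c, S.D c (∑ a, F a * S.vec E F a) * E c d
      = (∑ c, ∑ a, S.D c (F a) * (S.vec E F a * E c d))
        + ∑ a, ∑ c, sgn (S.ε a * S.ε c) • (F a * (S.D c (S.vec E F a) * E c d)) := by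
    rw [Finset.sum_comm (f := fun a c => sgn (S.ε a * S.ε c) • _)]
    simp only [map_sum, S.D_leibniz _ _ (hF _), Finset.sum_mul, add_mul, Finset.sum_add_distrib,
      smul_mul_assoc, mul_assoc, mul_comm (S.ε _) (S.ε _)]
  have h3 : ∑ a, ∑ c, sgn (S.ε a * S.ε c) • (F a * (S.D c (S.vec E F a) * E c d))
      = (∑ c, ∑ a, S.D c (F a) * (S.vec E F a * E c d))
        + ∑ a, ∑ e, ∑ c, sgn (S.ε a * S.ε c + S.ε e + S.ε c * S.ε e)
            • (F a * (F e * (S.D c (E e a) * E c d))) := by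
    have k : ∀ a c, sgn (S.ε a * S.ε c) • (F a * (S.D c (S.vec E F a) * E c d))
        = (∑ e, sgn (S.ε e) • (S.D c (F e) * (E e a * F a * E c d)))
          + ∑ e, sgn (S.ε a * S.ε c + S.ε e + S.ε c * S.ε e)
            • (F a * (F e * (S.D c (E e a) * E c d))) := by
      intro a c
      rw [D_vec hF, Finset.sum_mul, Finset.mul_sum, Finset.smul_sum, ← Finset.sum_add_distrib]
      refine Finset.sum_congr rfl fun e _ => ?_
      rw [smul_mul_assoc, mul_smul_comm, add_mul, mul_add, smul_add, smul_add]
      congr 1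
      · rw [← mul_assoc, ← mul_assoc, S.supercomm (hF a) (S.D_mem c (hF e)),
          S.supercomm (hE.E_mem e a) (hF a)]
        simp only [smul_mul_assoc, mul_smul_comm, sgn_smul_sgn_smul, mul_assoc]
        congr 2
        generalize S.ε a = p; generalize S.ε e = q; generalize S.ε c = r
        revert p q r; decide
      · simp only [smul_mul_assoc, mul_smul_comm, sgn_smul_sgn_smul, mul_assoc, add_assoc]
    simp only [k, Finset.sum_add_distrib]
    congr 1
    · rw [Finset.sum_comm]
      refine Finset.sum_congr rfl fun c _ => ?_
      rw [Finset.sum_comm]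
      refine Finset.sum_congr rfl fun e _ => ?_
      rw [← Finset.smul_sum, ← Finset.mul_sum, ← Finset.sum_mul, sum_E_mul_F hE hF,
        smul_mul_assoc, mul_smul_comm, sgn_smul_sgn_smul, CharTwo.add_self_eq_zero, sgn_zero_smul]
    · exact Finset.sum_congr rfl fun a _ => Finset.sum_comm
  -- both terms on the left of the contracted Jacobi identity become equal after a second
  -- contraction with `F`
  have h4 : ∑ a, ∑ e, ∑ c, sgn (S.ε a * S.ε c + S.ε e + S.ε c * S.ε e)
            • (F a * (F e * (S.D c (E e a) * E c d)))
      = (2 : ℚ) • ∑ a, ∑ e, ∑ c, sgn (S.ε e) • (F a * (F e * (E e c * S.D c (E a d)))) := by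
    have k : ∀ a e, ∑ c, sgn (S.ε a * S.ε c + S.ε e + S.ε c * S.ε e)
            • (F a * (F e * (S.D c (E e a) * E c d)))
        = (∑ c, sgn (S.ε a) • (F e * (F a * (E a c * S.D c (E e d)))))
          + ∑ c, sgn (S.ε e) • (F a * (F e * (E e c * S.D c (E a d)))) := by
      intro a e
      have := congrArg (fun x => F a * x) (jacobi_F hE hF hJac a e d)
      simp only [mul_add, Finset.mul_sum, mul_smul_comm] at this
      rw [← this]
      congr 1
      refine Finset.sum_congr rfl fun c _ => ?_
      rw [← mul_assoc, ← mul_assoc, S.supercomm (S.mul_mem (hF a) (hE.E_mem a c)) (hF e)]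
      simp only [smul_mul_assoc, sgn_smul_sgn_smul, mul_assoc]
      congr 2
      generalize S.ε a = p; generalize S.ε e = q; generalize S.ε c = r
      revert p q r; decide
    simp only [k, Finset.sum_add_distrib]
    rw [two_smul]
    congr 1
    rw [Finset.sum_comm]
  rw [h1, h2, h3, h4]
  module

/-- The square of the odd derivation `W = W^C ∂_C` is again a derivation: the terms with second
derivatives cancel in pairs. -/
theorem vec_op_sq (hE : S.AntiSymp E Einv) (hF : ∀ a, F a ∈ S.hom (S.ε a)) (g : A) :
    ∑ c, S.vec E F c * S.D c (∑ d, S.vec E F d * S.D d g)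
      = ∑ d, (∑ c, S.vec E F c * S.D c (S.vec E F d)) * S.D d g := by
  have h0 : ∑ c, ∑ d, sgn (S.ε c * (S.ε d + 1)) •
      (S.vec E F c * (S.vec E F d * S.D c (S.D d g))) = 0 := by
    apply eq_zero_of_eq_neg
    conv_lhs => rw [Finset.sum_comm]
    simp only [← Finset.sum_neg_distrib]
    refine Finset.sum_congr rfl fun c _ => Finset.sum_congr rfl fun d _ => ?_
    rw [← mul_assoc, S.supercomm (vec_mem hE hF d) (vec_mem hE hF c), S.D_comm d c]
    simp only [smul_mul_assoc, mul_smul_comm, sgn_smul_sgn_smul, neg_sgn_smul, mul_assoc]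
    congr 2
    generalize S.ε c = p; generalize S.ε d = q; revert p q; decide
  simp only [map_sum, S.D_leibniz _ _ (vec_mem hE hF _), Finset.mul_sum,
    mul_add (S.vec E F _), Finset.sum_add_distrib, mul_smul_comm, h0, add_zero, Finset.sum_mul, mul_assoc]
  rw [Finset.sum_comm]

/-! ### The part linear in the connection -/

/-- The `a`-th component of the vector field under the divergence in the anticommutator of `2Δ_1`
and `W`: second derivatives of `g` cancel, and `curvUp_eq` identifies the rest. -/
theorem anticomm_component (hE : S.AntiSymp E Einv) (hF : ∀ a, F a ∈ S.hom (S.ε a))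
    (hJac : S.JacobiId E) (g : A) (a : ι) :
    sgn (S.ε a) • (∑ b, E a b * S.D b (∑ c, S.vec E F c * S.D c g))
      + (∑ c, S.vec E F c * S.D c (∑ b, E a b * S.D b g))
      - (∑ c, sgn (S.ε a * S.ε c) • (S.D c (S.vec E F a) * ∑ b, E c b * S.D b g))
    = sgn (S.ε a) • ∑ d, S.curvUp E F a d * S.D d g := by
  have h1 : sgn (S.ε a) • (∑ b, E a b * S.D b (∑ c, S.vec E F c * S.D c g))
      = (∑ d, (∑ b, sgn (S.ε a) • (E a b * S.D b (S.vec E F d))) * S.D d g)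
        + ∑ c, ∑ b, sgn (S.ε a + S.ε b * (S.ε c + 1)) •
            (E a b * (S.vec E F c * S.D b (S.D c g))) := by
    simp only [map_sum, S.D_leibniz _ _ (vec_mem hE hF _), Finset.mul_sum, mul_add,
      Finset.sum_add_distrib, mul_smul_comm, smul_add, Finset.smul_sum, Finset.sum_mul, mul_assoc,
      sgn_smul_sgn_smul, smul_mul_assoc]
    congr 1 <;> exact Finset.sum_comm
  have h2 : ∑ c, S.vec E F c * S.D c (∑ b, E a b * S.D b g)
      = (∑ d, (∑ c, S.vec E F c * S.D c (E a d)) * S.D d g)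
        - ∑ c, ∑ b, sgn (S.ε a + S.ε b * (S.ε c + 1)) •
            (E a b * (S.vec E F c * S.D b (S.D c g))) := by
    rw [sub_eq_add_neg]
    simp only [map_sum, S.D_leibniz _ _ (hE.E_mem _ _), Finset.mul_sum, mul_add,
      Finset.sum_add_distrib, mul_smul_comm, Finset.sum_mul, mul_assoc, ← Finset.sum_neg_distrib]
    congr 1
    · exact Finset.sum_comm
    · refine Finset.sum_congr rfl fun c _ => Finset.sum_congr rfl fun b _ => ?_
      rw [← mul_assoc, S.supercomm (vec_mem hE hF c) (hE.E_mem a b), S.D_comm c b]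
      simp only [smul_mul_assoc, mul_smul_comm, sgn_smul_sgn_smul, neg_sgn_smul, mul_assoc]
      congr 2
      generalize S.ε a = p; generalize S.ε b = q; generalize S.ε c = r
      revert p q r; decide
  have h3 : ∑ c, sgn (S.ε a * S.ε c) • (S.D c (S.vec E F a) * ∑ b, E c b * S.D b g)
      = ∑ d, (∑ c, sgn (S.ε a * S.ε c) • (S.D c (S.vec E F a) * E c d)) * S.D d g := by
    simp only [Finset.mul_sum, Finset.smul_sum, Finset.sum_mul, smul_mul_assoc, mul_assoc]
    exact Finset.sum_comm
  have h4 : sgn (S.ε a) • ∑ d, S.curvUp E F a d * S.D d g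
      = ∑ d, (sgn (S.ε a) • S.curvUp E F a d) * S.D d g := by
    simp only [Finset.smul_sum, smul_mul_assoc]
  rw [h1, h2, h3, h4]
  simp only [curvUp_eq hE hF hJac, sub_mul, add_mul, Finset.sum_sub_distrib,
    Finset.sum_add_distrib]
  abel

/-- Two integrations by parts, for a component `w` of an odd vector field. -/
theorem mul_D_D (a c : ι) {w : A} (hw : w ∈ S.hom (S.ε c + 1)) (y : A) :
    sgn (S.ε a) • (w * S.D c (S.D a y))
      = S.D a (w * S.D c y) - sgn (S.ε a * S.ε c) • S.D c (S.D a w * y)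
        + S.D a (S.D c w) * y := by
  rw [S.D_leibniz a _ hw, S.D_leibniz c _ (S.D_mem a hw), S.D_comm c a y, S.D_comm c a w]
  simp only [smul_add, smul_mul_assoc, mul_smul_comm, sgn_smul_sgn_smul]
  have e1 : S.ε a + S.ε c * S.ε a = S.ε a * (S.ε c + 1) := by
    generalize S.ε a = p; generalize S.ε c = q; revert p q; decide
  have e2 : S.ε a * S.ε c + S.ε c * S.ε a = 0 := by
    generalize S.ε a = p; generalize S.ε c = q; revert p q; decide
  have e3 : S.ε a * S.ε c + S.ε c * (S.ε c + 1 + S.ε a) = 0 := by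
    generalize S.ε a = p; generalize S.ε c = q; revert p q; decide
  rw [e1, e2, e3, sgn_zero_smul, sgn_zero_smul]
  abel

/-- The part of the decomposition linear in the connection: the anticommutator of `2Δ_1` and
`W` is `2Δ_{0,R} + (div W, ·)`. -/
theorem anticomm (hE : S.AntiSymp E Einv) (hF : ∀ a, F a ∈ S.hom (S.ε a))
    (hJac : S.JacobiId E) (g : A) :
    (∑ a, sgn (S.ε a) • S.D a (∑ b, E a b * S.D b (∑ c, S.vec E F c * S.D c g)))
      + (∑ c, S.vec E F c * S.D c (∑ a, sgn (S.ε a) • S.D a (∑ b, E a b * S.D b g)))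
    = (∑ a, sgn (S.ε a) • S.D a (∑ d, S.curvUp E F a d * S.D d g))
      + ∑ a, S.D a (∑ c, S.D c (S.vec E F c)) * ∑ b, E a b * S.D b g := by
  have h1 : ∑ c, S.vec E F c * S.D c (∑ a, sgn (S.ε a) • S.D a (∑ b, E a b * S.D b g))
      = (∑ a, S.D a (∑ c, S.vec E F c * S.D c (∑ b, E a b * S.D b g)))
        - (∑ a, S.D a (∑ c, sgn (S.ε a * S.ε c) •
            (S.D c (S.vec E F a) * ∑ b, E c b * S.D b g)))
        + ∑ a, S.D a (∑ c, S.D c (S.vec E F c)) * ∑ b, E a b * S.D b g := by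
    generalize hX : (fun a => ∑ b, E a b * S.D b g) = X
    have hX' : ∀ a, ∑ b, E a b * S.D b g = X a := fun a => congrFun hX a
    simp only [hX']
    have k : ∑ a, S.D a (∑ c, sgn (S.ε a * S.ε c) • (S.D c (S.vec E F a) * X c))
        = ∑ a, ∑ c, sgn (S.ε a * S.ε c) • S.D c (S.D a (S.vec E F c) * X a) := by
      rw [Finset.sum_comm]
      simp only [map_sum, map_smul]
      refine Finset.sum_congr rfl fun a _ => Finset.sum_congr rfl fun c _ => ?_
      rw [mul_comm (S.ε a)]
    rw [k]
    simp only [map_sum, map_smul, Finset.mul_sum, Finset.sum_mul, mul_smul_comm]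
    rw [Finset.sum_comm]
    simp only [mul_D_D _ _ (vec_mem hE hF _), Finset.sum_add_distrib, Finset.sum_sub_distrib]
  have h2 : ∀ a, sgn (S.ε a) • S.D a (∑ d, S.curvUp E F a d * S.D d g)
      = S.D a (sgn (S.ε a) • ∑ d, S.curvUp E F a d * S.D d g) := fun a => by rw [map_smul]
  rw [h1]
  simp only [h2, ← anticomm_component hE hF hJac g, map_sub, map_add, map_smul,
    Finset.sum_add_distrib, Finset.sum_sub_distrib]
  abel

/-! ### Assembling the operators -/

theorem lap_apply (F : ι → A) (M : ι → ι → A) (g : A) :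
    S.lap F M g = (1/2 : ℚ) • ((∑ a, sgn (S.ε a) • S.D a (∑ b, M a b * S.D b g))
      + ∑ a, sgn (S.ε a) • (F a * ∑ b, M a b * S.D b g)) := by
  simp [lap, L, Finset.sum_add_distrib, Finset.mul_sum, Finset.smul_sum]

theorem sum_F_E_D (g : A) :
    ∑ a, sgn (S.ε a) • (F a * ∑ b, E a b * S.D b g) = ∑ c, S.vec E F c * S.D c g := by
  simp only [vec, Finset.mul_sum, Finset.smul_sum, Finset.sum_mul, smul_mul_assoc, mul_assoc]
  exact Finset.sum_comm

theorem nuF0_eq (hE : S.AntiSymp E Einv) (hF : ∀ a, F a ∈ S.hom (S.ε a)) :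
    S.nuF0 E F = (1/4 : ℚ) • ((∑ c, S.D c (S.vec E F c))
      + (1/2 : ℚ) • ∑ a, F a * S.vec E F a) := by
  have k : ∀ a, ∑ b, sgn (S.ε a) • (S.D a (E a b * F b) + (1/2 : ℚ) • (F a * (E a b * F b)))
      = S.D a (S.vec E F a) + (1/2 : ℚ) • (F a * S.vec E F a) := by
    intro a
    rw [← Finset.smul_sum, Finset.sum_add_distrib, ← Finset.smul_sum, ← map_sum, ← Finset.mul_sum,
      sum_E_mul_F hE hF, map_smul, mul_smul_comm, smul_add, smul_comm (sgn (S.ε a)) (1/2 : ℚ)]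
    simp only [sgn_smul_sgn_smul, CharTwo.add_self_eq_zero, sgn_zero_smul]
  simp only [nuF0, k, Finset.sum_add_distrib, Finset.smul_sum]

theorem Hop_apply (x g : A) :
    S.Hop E x g = ∑ a, S.D a x * ∑ b, E a b * S.D b g := by
  simp [Hop, L, Finset.mul_sum]

end Aux

/-- Lemma 2: With `Δ_F = Δ_1 + V`, `V = ((-1)^{ε_A}/2) F_A (Γ^A,·)`,
one has `Δ_F² = Δ_1² + (1/2)Δ_{F,R} + (ν_F^{(0)},·)`. -/
theorem lapF_squared_decomposition
    {ι : Type} [Fintype ι] [DecidableEq ι] {A : Type} [Ring A] [Algebra ℚ A]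
    (S : SuperAlg ι A) (E Einv : ι → ι → A) (F : ι → A)
    (hE : S.AntiSymp E Einv) (hF : ∀ a, F a ∈ S.hom (S.ε a))
    (hJac : S.JacobiId E) :
    S.lap F E = S.lap (fun _ => (0 : A)) E
        + (1/2 : ℚ) • ∑ a, ∑ b, sgn (S.ε a) • (L (F a) ∘ₗ L (E a b) ∘ₗ S.D b)
    ∧ (S.lap F E) ∘ₗ (S.lap F E)
      = (S.lap (fun _ => (0 : A)) E) ∘ₗ (S.lap (fun _ => (0 : A)) E)
        + (1/2 : ℚ) • S.lap F (fun a b => S.curvUp E F a b)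
        + S.Hop E (S.nuF0 E F) := by
  constructor
  · ext g
    simp [lap, L, Finset.sum_add_distrib]
  · ext g
    have hlin := anticomm hE hF hJac g
    have hquad := vec_op_sq hE hF g
    simp only [vec_sq hE hF hJac, add_mul, Finset.sum_add_distrib] at hquad
    have q1 : ∑ d, (∑ a, sgn (S.ε a) • (F a * S.curvUp E F a d)) * S.D d g
        = ∑ a, sgn (S.ε a) • (F a * ∑ d, S.curvUp E F a d * S.D d g) := by
      simp only [Finset.mul_sum, Finset.smul_sum, Finset.sum_mul, smul_mul_assoc, mul_assoc]
      exact Finset.sum_comm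
    have q2 : ∑ d, ((1/2 : ℚ) • ∑ c, S.D c (∑ a, F a * S.vec E F a) * E c d) * S.D d g
        = (1/2 : ℚ) • S.Hop E (∑ a, F a * S.vec E F a) g := by
      simp only [Hop_apply, smul_mul_assoc, ← Finset.smul_sum]
      simp only [Finset.mul_sum, Finset.sum_mul, mul_assoc]
      rw [Finset.sum_comm]
    rw [q1, q2] at hquad
    have hν : S.Hop E (S.nuF0 E F) g = (1/4 : ℚ) • (S.Hop E (∑ c, S.D c (S.vec E F c)) g
        + (1/2 : ℚ) • S.Hop E (∑ a, F a * S.vec E F a) g) := by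
      simp only [nuF0_eq hE hF, Hop_apply, map_smul, map_add, smul_mul_assoc, add_mul,
        Finset.sum_add_distrib, smul_add, ← Finset.smul_sum]
    have hlapF : ∀ x, S.lap F E x = (1/2 : ℚ) •
        ((∑ a, sgn (S.ε a) • S.D a (∑ b, E a b * S.D b x)) + ∑ c, S.vec E F c * S.D c x) :=
      fun x => by rw [lap_apply, sum_F_E_D]
    have hlap0 : ∀ x, S.lap (fun _ => (0 : A)) E x = (1/2 : ℚ) •
        (∑ a, sgn (S.ε a) • S.D a (∑ b, E a b * S.D b x)) :=
      fun x => by simp [lap_apply]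
    have hsplit : ∀ x, S.lap F E x = S.lap (fun _ => (0 : A)) E x
        + (1/2 : ℚ) • ∑ c, S.vec E F c * S.D c x :=
      fun x => by rw [hlapF, hlap0, smul_add]
    have hlin' : (2 : ℚ) • S.lap (fun _ => (0 : A)) E (∑ c, S.vec E F c * S.D c g)
        + (2 : ℚ) • (∑ c, S.vec E F c * S.D c (S.lap (fun _ => (0 : A)) E g))
        = (∑ a, sgn (S.ε a) • S.D a (∑ d, S.curvUp E F a d * S.D d g))
          + S.Hop E (∑ c, S.D c (S.vec E F c)) g := by
      rw [Hop_apply, ← hlin, hlap0, hlap0]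
      simp only [map_smul, mul_smul_comm, ← Finset.smul_sum, smul_smul]
      norm_num
    simp only [LinearMap.comp_apply, LinearMap.add_apply, LinearMap.smul_apply]
    rw [hν, lap_apply F (fun a b => S.curvUp E F a b), hsplit (S.lap F E g), hsplit g]
    simp only [map_add, map_smul, mul_add, mul_smul_comm, Finset.sum_add_distrib,
      ← Finset.smul_sum]
    linear_combination (norm := module) (1/4 : ℚ) • hlin' + (1/4 : ℚ) • hquad

end SuperAlg
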